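/- Let x̄ be a local minimizer of (P) at which GACQ holds. Then x̄ is AM-stationary in direction d for all d ∈ C(x̄) ∩ 𝕊. -/

import Mathlib

open Filter Topology Metric Set
open scoped RealInnerProductSpace Pointwise

noncomputable section

/-- Euclidean space `ℝ^n`. -/
abbrev Eu (n : ℕ) := EuclideanSpace ℝ (Fin n)

section Cones

variable {H : Type*} [NormedAddCommGroup H] [InnerProductSpace ℝ H]

/-- Tangent (Bouligand) cone to `Ω` at `x` (empty if `x ∉ Ω`). -/
def tanCone (Ω : Set H) (x : H) : Set H :=
  {d | x ∈ Ω ∧ ∃ (dk : ℕ → H) (tk : ℕ → ℝ),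
    Tendsto dk atTop (𝓝 d) ∧ (∀ k, 0 < tk k) ∧ Tendsto tk atTop (𝓝 0) ∧
    ∀ k, x + tk k • dk k ∈ Ω}

/-- Polar cone of a set. -/
def polarCone (C : Set H) : Set H := {y | ∀ x ∈ C, ⟪x, y⟫ ≤ 0}

/-- Regular (Fréchet) normal cone: polar of the tangent cone (empty if `x ∉ Ω`). -/
def regNormal (Ω : Set H) (x : H) : Set H :=
  {η | x ∈ Ω ∧ η ∈ polarCone (tanCone Ω x)}

/-- Limiting (Mordukhovich) normal cone (empty if `x ∉ Ω`). -/
def limNormal (Ω : Set H) (x : H) : Set H :=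
  {η | x ∈ Ω ∧ ∃ (xk ηk : ℕ → H),
    Tendsto xk atTop (𝓝 x) ∧ Tendsto ηk atTop (𝓝 η) ∧
    ∀ k, ηk k ∈ regNormal Ω (xk k)}

/-- Directional limiting normal cone to `Ω` at `x` in direction `d`. -/
def dirLimNormal (Ω : Set H) (x d : H) : Set H :=
  {η | x ∈ Ω ∧ ∃ (dk : ℕ → H) (tk : ℕ → ℝ) (ηk : ℕ → H),
    Tendsto dk atTop (𝓝 d) ∧ (∀ k, 0 < tk k) ∧ Tendsto tk atTop (𝓝 0) ∧
    Tendsto ηk atTop (𝓝 η) ∧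
    ∀ k, ηk k ∈ regNormal Ω (x + tk k • dk k)}

/-- The pair `(ξ, r)` as an element of the ℓ²-product `H ×₂ ℝ`. -/
def pl2 (ξ : H) (r : ℝ) : WithLp 2 (H × ℝ) := (WithLp.equiv 2 (H × ℝ)).symm (ξ, r)

/-- Epigraph of `φ` as a subset of the ℓ²-product `H ×₂ ℝ`. -/
def epigraphSet (φ : H → ℝ) : Set (WithLp 2 (H × ℝ)) :=
  {p | φ ((WithLp.equiv 2 (H × ℝ)) p).1 ≤ ((WithLp.equiv 2 (H × ℝ)) p).2}

/-- Limiting subdifferential of `φ` at `x`. -/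
def limSubdiff (φ : H → ℝ) (x : H) : Set H :=
  {ξ | pl2 ξ (-1) ∈ limNormal (epigraphSet φ) (pl2 x (φ x))}

/-- Directional limiting subdifferential of `φ` at `x` in direction `d`, where `φd`
denotes the directional derivative `φ'(x; d)`. -/
def dirLimSubdiff (φ : H → ℝ) (x d : H) (φd : ℝ) : Set H :=
  {ξ | pl2 ξ (-1) ∈ dirLimNormal (epigraphSet φ) (pl2 x (φ x)) (pl2 d φd)}

/-- Directional neighborhood `B_{ε,δ}(d)`. -/
def dirNbhd (d : H) (ε δ : ℝ) : Set H :=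
  {y | ‖y‖ ≤ ε ∧ ‖‖d‖ • y - ‖y‖ • d‖ ≤ δ * (‖y‖ * ‖d‖)}

end Cones

section Problem

variable {n l : ℕ}

/-- `F' x d` is the directional derivative of `F` at `x` in direction `d`. -/
def IsDirDeriv (F : Eu n → Eu l) (F' : Eu n → Eu n → Eu l) : Prop :=
  ∀ x d : Eu n,
    Tendsto (fun t : ℝ => t⁻¹ • (F (x + t • d) - F x)) (𝓝[>] (0:ℝ)) (𝓝 (F' x d))

/-- Limiting subdifferential of the scalarization `⟨λ, F⟩` at `x`. -/
def scalSubdiff (F : Eu n → Eu l) (lam : Eu l) (x : Eu n) : Set (Eu n) :=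
  limSubdiff (fun y => ⟪lam, F y⟫) x

/-- Directional limiting subdifferential of `⟨λ, F⟩` at `x` in direction `d`. -/
def scalDirSubdiff (F : Eu n → Eu l) (F' : Eu n → Eu n → Eu l) (lam : Eu l)
    (x d : Eu n) : Set (Eu n) :=
  dirLimSubdiff (fun y => ⟪lam, F y⟫) x d ⟪lam, F' x d⟫

/-- Linearization cone. -/
def linCone (F : Eu n → Eu l) (F' : Eu n → Eu n → Eu l) (Γ : Set (Eu l)) (x : Eu n) :
    Set (Eu n) :=
  {d | F' x d ∈ tanCone Γ (F x)}

/-- Explicit critical cone `C(x̄)`. -/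
def critCone (f : Eu n → ℝ) (F : Eu n → Eu l) (F' : Eu n → Eu n → Eu l)
    (Γ : Set (Eu l)) (x : Eu n) : Set (Eu n) :=
  {d | ⟪gradient f x, d⟫ ≤ 0 ∧ d ∈ linCone F F' Γ x}

/-- Implicit critical cone `Ĉ(x̄)`. -/
def implCritCone (f : Eu n → ℝ) (F : Eu n → Eu l) (Γ : Set (Eu l)) (x : Eu n) :
    Set (Eu n) :=
  {d | ⟪gradient f x, d⟫ ≤ 0 ∧ d ∈ tanCone (F ⁻¹' Γ) x}

/-- M-stationarity. -/
def MStat (f : Eu n → ℝ) (F : Eu n → Eu l) (Γ : Set (Eu l)) (x : Eu n) : Prop :=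
  ∃ lam : Eu l, -gradient f x ∈ scalSubdiff F lam x ∧ lam ∈ limNormal Γ (F x)

/-- M-stationarity in direction `d`. -/
def MStatDir (f : Eu n → ℝ) (F : Eu n → Eu l) (F' : Eu n → Eu n → Eu l)
    (Γ : Set (Eu l)) (x d : Eu n) : Prop :=
  ∃ lam : Eu l, -gradient f x ∈ scalDirSubdiff F F' lam x d ∧
    lam ∈ dirLimNormal Γ (F x) (F' x d)

/-- Metric subregularity constraint qualification in direction `d`. -/
def MSCQdir (F : Eu n → Eu l) (Γ : Set (Eu l)) (x d : Eu n) : Prop :=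
  ∃ ε > (0:ℝ), ∃ δ > (0:ℝ), ∃ κ > (0:ℝ), ∀ y : Eu n, y - x ∈ dirNbhd d ε δ →
    infDist y (F ⁻¹' Γ) ≤ κ * infDist (F y) Γ

/-- Metric subregularity constraint qualification. -/
def MSCQ (F : Eu n → Eu l) (Γ : Set (Eu l)) (x : Eu n) : Prop := MSCQdir F Γ x 0

/-- AM-stationary sequence w.r.t. `x`. -/
def AMSeq (f : Eu n → ℝ) (F : Eu n → Eu l) (Γ : Set (Eu l)) (x : Eu n)
    (xk : ℕ → Eu n) (lamk δk : ℕ → Eu l) (εk : ℕ → Eu n) : Prop :=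
  (∀ k, εk k - gradient f (xk k) ∈ scalSubdiff F (lamk k) (xk k)) ∧
  (∀ k, lamk k ∈ limNormal Γ (F (xk k) - δk k)) ∧
  Tendsto xk atTop (𝓝 x) ∧ Tendsto δk atTop (𝓝 0) ∧ Tendsto εk atTop (𝓝 0)

/-- AM-stationarity. -/
def AMStat (f : Eu n → ℝ) (F : Eu n → Eu l) (Γ : Set (Eu l)) (x : Eu n) : Prop :=
  ∃ xk lamk δk εk, AMSeq f F Γ x xk lamk δk εk

/-- AM-stationary sequence w.r.t. `x` in direction `d`. -/
def AMSeqDir (f : Eu n → ℝ) (F : Eu n → Eu l) (Γ : Set (Eu l)) (x : Eu n)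
    (xk : ℕ → Eu n) (lamk δk : ℕ → Eu l) (εk : ℕ → Eu n) (d : Eu n) : Prop :=
  AMSeq f F Γ x xk lamk δk εk ∧
  (∀ k, xk k ≠ x) ∧
  Tendsto (fun k => ‖xk k - x‖⁻¹ • (xk k - x)) atTop (𝓝 d) ∧
  Tendsto (fun k => ‖xk k - x‖⁻¹ • δk k) atTop (𝓝 (0 : Eu l)) ∧
  (∃ θ : ℕ → ℝ, (∀ k, 0 ≤ θ k) ∧ Tendsto θ atTop (𝓝 0) ∧
    ∀ k, ‖‖δk k‖ • lamk k - ‖lamk k‖ • δk k‖ ≤ ‖δk k‖ * ‖lamk k‖ * θ k) ∧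
  (∃ M : ℝ, ∀ k, ‖δk k‖ * ‖lamk k‖ / ‖xk k - x‖ ≤ M)

/-- AM-stationarity in direction `d`. -/
def AMStatDir (f : Eu n → ℝ) (F : Eu n → Eu l) (Γ : Set (Eu l)) (x d : Eu n) : Prop :=
  ∃ xk lamk δk εk, AMSeqDir f F Γ x xk lamk δk εk d

/-- The Minkowski sum `Σ_i |λ_i| ∂(sgn(λ_i) F_i)(x; d)`. -/
def dirSumSet (F : Eu n → Eu l) (F' : Eu n → Eu n → Eu l) (lam : Eu l) (x d : Eu n) :
    Set (Eu n) :=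
  {v | ∃ s : Fin l → Eu n,
    (∀ i, s i ∈ |lam i| • dirLimSubdiff (fun y => Real.sign (lam i) * F y i) x d
        (Real.sign (lam i) * F' x d i)) ∧
    v = ∑ i, s i}

/-- Standing sum-rule assumption. -/
def SumRule (F : Eu n → Eu l) (F' : Eu n → Eu n → Eu l) : Prop :=
  ∀ (x d : Eu n) (lam : Eu l), scalDirSubdiff F F' lam x d = dirSumSet F F' lam x d

end Problem

/-!
Let `d` be a unit vector tangent to the feasible set with `⟪∇f(x), d⟫ ≤ 0`, and let
`z = x + t • w`, with `w` close to `d`, be feasible, so that `f z - f x ≤ o(t)`. Near `x`, minimize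
`y ↦ f y + (2t)⁻¹ ‖y - z‖² + ρ/2 dist(F y, Γ)²`. If `ρ` is large, a minimizer `x'` is so nearly
feasible that `f x'` cannot be much below `f x`; comparing the values at `x'` and `z` then forces
`‖x' - z‖ = o(t)` and `ρ dist(F x', Γ)² = o(t)`. With a projection `F x' - δ` of `F x'` onto `Γ`,
Fermat's rule yields the multiplier `λ = ρ δ` and the residual `ε = t⁻¹ (z - x')`. Since
`‖x' - x‖ ~ t`, all the estimates can be read relative to `‖x' - x‖`.
-/

section Normed

variable {E G : Type*} [NormedAddCommGroup E] [NormedAddCommGroup G]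

lemma isBigO_sub_of_locallyLipschitz {F : E → G} (hF : LocallyLipschitz F) (x : E) :
    (fun u => F u - F x) =O[𝓝 x] fun u => u - x := by
  obtain ⟨K, U, hU, hKU⟩ := hF x
  refine .of_bound K ?_
  filter_upwards [hU] with u hu
  exact hKU.norm_sub_le hu (mem_of_mem_nhds hU)

variable {ι V : Type*} [AddCommGroup V] [TopologicalSpace V] [Module ℝ V] [ContinuousSMul ℝ V]
  {L : Filter ι} {t : ι → ℝ} {a : ι → V} {b : V}

lemma tendsto_zero_of_tendsto_inv_smul (ht : ∀ k, 0 < t k) (ht0 : Tendsto t L (𝓝 0))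
    (ha : Tendsto (fun k => (t k)⁻¹ • a k) L (𝓝 b)) : Tendsto a L (𝓝 0) := by
  simpa [smul_smul, (ht _).ne'] using ht0.smul ha

variable [NormedSpace ℝ E]

lemma norm_inv_smul_lt_iff {t s : ℝ} {v : E} (ht : 0 < t) : ‖t⁻¹ • v‖ < s ↔ ‖v‖ < s * t := by
  rw [norm_smul, norm_inv, Real.norm_of_nonneg ht.le, inv_mul_lt_iff₀' ht]

lemma tendsto_inv_norm_smul_of_tendsto_inv_smul {v : ι → E} {d : E}
    (ht : ∀ k, 0 < t k) (hv : Tendsto (fun k => (t k)⁻¹ • v k) L (𝓝 d)) (hd : ‖d‖ = 1)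
    (ha : Tendsto (fun k => (t k)⁻¹ • a k) L (𝓝 b)) :
    Tendsto (fun k => ‖v k‖⁻¹ • a k) L (𝓝 b) := by
  have hscale : Tendsto (fun k => ‖(t k)⁻¹ • v k‖⁻¹) L (𝓝 1) := by
    simpa [hd] using hv.norm.inv₀ (by simp [hd])
  rw [← one_smul ℝ b]
  refine (hscale.smul ha).congr fun k => ?_
  rw [norm_smul, norm_inv, Real.norm_of_nonneg (ht k).le, smul_smul, mul_inv, inv_inv,
    mul_right_comm, mul_inv_cancel₀ (ht k).ne', one_mul]

end Normed

section RegularNormals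

variable {H : Type*} [NormedAddCommGroup H] [InnerProductSpace ℝ H] {Ω : Set H} {x η : H}

lemma regNormal_subset_limNormal : regNormal Ω x ⊆ limNormal Ω x := fun η h =>
  ⟨h.1, fun _ => x, fun _ => η, tendsto_const_nhds, tendsto_const_nhds, fun _ => h⟩

lemma smul_mem_regNormal {ρ : ℝ} (hρ : 0 ≤ ρ) (h : η ∈ regNormal Ω x) :
    ρ • η ∈ regNormal Ω x := by
  refine ⟨h.1, fun v hv => ?_⟩
  rw [real_inner_smul_right]
  exact mul_nonpos_of_nonneg_of_nonpos hρ (h.2 v hv)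

lemma mem_regNormal_of_eventually_inner_le {r : H → ℝ} (hx : x ∈ Ω)
    (hr : r =o[𝓝[Ω] x] fun y => y - x) (h : ∀ᶠ y in 𝓝[Ω] x, ⟪y - x, η⟫ ≤ r y) :
    η ∈ regNormal Ω x := by
  refine ⟨hx, ?_⟩
  rintro v ⟨-, w, t, hw, ht, ht0, hmem⟩
  have hlim : Tendsto (fun k => x + t k • w k) atTop (𝓝[Ω] x) :=
    tendsto_nhdsWithin_iff.2 ⟨by simpa using (ht0.smul hw).const_add x, .of_forall hmem⟩
  have hquot : (fun k => (t k)⁻¹ * r (x + t k • w k)) =o[atTop] w := by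
    refine ((Asymptotics.isBigO_refl (fun k => (t k)⁻¹) atTop).smul_isLittleO
      (hr.comp_tendsto hlim)).congr_right fun k => ?_
    simp only [Function.comp_apply, add_sub_cancel_left, inv_smul_smul₀ (ht k).ne']
  have hquot0 := (Asymptotics.isLittleO_one_iff ℝ).1 (hquot.trans_isBigO (hw.isBigO_one ℝ))
  refine le_of_tendsto_of_tendsto (hw.inner tendsto_const_nhds) hquot0 ?_
  filter_upwards [hlim.eventually h] with k hk
  rw [add_sub_cancel_left, real_inner_smul_left] at hk
  exact (le_inv_mul_iff₀ (ht k)).2 hk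

end RegularNormals

section Projection

variable {G : Type*} [NormedAddCommGroup G] [InnerProductSpace ℝ G] {Γ : Set G} {p y : G}

lemma sub_mem_regNormal_of_infDist_eq (hy : y ∈ Γ) (hp : infDist p Γ = ‖p - y‖) :
    p - y ∈ regNormal Γ y := by
  refine mem_regNormal_of_eventually_inner_le hy
    ((Asymptotics.isLittleO_pow_sub_sub y one_lt_two).mono nhdsWithin_le_nhds) ?_
  filter_upwards [self_mem_nhdsWithin] with q hq
  have hle : ‖p - y‖ ≤ ‖p - y - (q - y)‖ := by
    rw [sub_sub_sub_cancel_right, ← hp, ← dist_eq_norm]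
    exact infDist_le_dist_of_mem hq
  have hsq := pow_le_pow_left₀ (norm_nonneg _) hle 2
  rw [norm_sub_sq_real (p - y), real_inner_comm] at hsq
  linarith [sq_nonneg ‖q - y‖]

lemma infDist_sq_le_add_inner (hy : y ∈ Γ) (hp : infDist p Γ = ‖p - y‖) (q : G) :
    infDist q Γ ^ 2 ≤ infDist p Γ ^ 2 + 2 * ⟪p - y, q - p⟫ + ‖q - p‖ ^ 2 := by
  calc infDist q Γ ^ 2 ≤ ‖(p - y) + (q - p)‖ ^ 2 := by
        refine pow_le_pow_left₀ infDist_nonneg ?_ 2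
        rw [add_comm, sub_add_sub_cancel, ← dist_eq_norm]
        exact infDist_le_dist_of_mem hy
    _ = infDist p Γ ^ 2 + 2 * ⟪p - y, q - p⟫ + ‖q - p‖ ^ 2 := by rw [norm_add_sq_real, hp]

end Projection

section FermatRule

variable {E : Type*} [NormedAddCommGroup E] [InnerProductSpace ℝ E] {x : E}

lemma mem_limSubdiff_of_eventually_add_inner_le {φ r : E → ℝ} {ξ : E}
    (hr : r =o[𝓝 x] fun u => u - x) (h : ∀ᶠ u in 𝓝 x, φ x + ⟪u - x, ξ⟫ ≤ φ u + r u) :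
    ξ ∈ limSubdiff φ x := by
  have hfst : Tendsto (fun p : WithLp 2 (E × ℝ) => p.fst)
      (𝓝[epigraphSet φ] pl2 x (φ x)) (𝓝 x) :=
    ((WithLp.prod_continuous_ofLp 2 E ℝ).fst.tendsto _).mono_left nhdsWithin_le_nhds
  have hfst_sub : (fun p : WithLp 2 (E × ℝ) => p.fst - x)
      =O[𝓝[epigraphSet φ] pl2 x (φ x)] fun p => p - pl2 x (φ x) :=
    .of_bound' (.of_forall fun p => WithLp.norm_fst_le E (p - pl2 x (φ x)))
  refine regNormal_subset_limNormal (mem_regNormal_of_eventually_inner_le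
    (r := fun p => r p.fst) (by simp [epigraphSet, pl2])
    ((hr.comp_tendsto hfst).trans_isBigO hfst_sub) ?_)
  filter_upwards [hfst.eventually h, self_mem_nhdsWithin] with p hp hmem
  have hepi : φ p.fst ≤ p.snd := hmem
  have hinner : ⟪p - pl2 x (φ x), pl2 ξ (-1)⟫ = ⟪p.fst - x, ξ⟫ - (p.snd - φ x) := by
    simp [WithLp.prod_inner_apply, pl2, sub_eq_add_neg]
  rw [hinner]
  linarith

variable [CompleteSpace E]

lemma neg_mem_limSubdiff_of_hasGradientAt {φ g r : E → ℝ} {v : E} (hg : HasGradientAt g v x)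
    (hr : r =o[𝓝 x] fun u => u - x) (h : ∀ᶠ u in 𝓝 x, φ x + g x ≤ φ u + g u + r u) :
    -v ∈ limSubdiff φ x := by
  refine mem_limSubdiff_of_eventually_add_inner_le
    ((hasGradientAt_iff_isLittleO.1 hg).add hr) ?_
  filter_upwards [h] with u hu
  rw [inner_neg_right, real_inner_comm]
  linarith

lemma hasGradientAt_add_norm_sub_sq {f : E → ℝ} {v : E} (hf : HasGradientAt f v x)
    (c : ℝ) (z : E) :
    HasGradientAt (fun u => f u + c * ‖u - z‖ ^ 2) (v + (2 * c) • (x - z)) x := by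
  have hsq := (((hasFDerivAt_id x).sub_const z).norm_sq).const_mul c
  refine hasGradientAt_iff_hasFDerivAt.2 ((hf.hasFDerivAt.add hsq).congr_fderiv ?_)
  ext u
  simp only [id_eq, map_sub, ContinuousLinearMap.comp_id, add_apply,
    InnerProductSpace.toDual_apply_apply, smul_apply, sub_apply, coe_innerSL_apply, nsmul_eq_mul,
    Nat.cast_ofNat, smul_eq_mul, map_add, map_smul, add_right_inj]
  ring

variable {G : Type*} [NormedAddCommGroup G] [InnerProductSpace ℝ G] {F : E → G} {Γ : Set G}

lemma neg_mem_limSubdiff_of_isLocalMin_add_infDist_sq {g : E → ℝ} {v : E} {y : G} {ρ : ℝ}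
    (hg : HasGradientAt g v x) (hF : (fun u => F u - F x) =O[𝓝 x] fun u => u - x)
    (hρ : 0 ≤ ρ) (hy : y ∈ Γ) (hxy : infDist (F x) Γ = ‖F x - y‖)
    (hmin : IsLocalMin (fun u => g u + ρ / 2 * infDist (F u) Γ ^ 2) x) :
    -v ∈ limSubdiff (fun u => ⟪ρ • (F x - y), F u⟫) x := by
  have hr : (fun u => ρ / 2 * ‖F u - F x‖ ^ 2) =o[𝓝 x] fun u => u - x :=
    ((hF.norm_left.norm_right.pow 2).trans_isLittleO
      (Asymptotics.isLittleO_pow_sub_sub x one_lt_two)).const_mul_left _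
  refine neg_mem_limSubdiff_of_hasGradientAt hg hr ?_
  filter_upwards [hmin] with u hu
  have hdist := mul_le_mul_of_nonneg_left
    (infDist_sq_le_add_inner hy hxy (F u)) (div_nonneg hρ zero_le_two)
  rw [inner_sub_right] at hdist
  rw [real_inner_smul_left, real_inner_smul_left]
  linarith

end FermatRule

section Penalization

lemma eventually_forall_lt_add_mul_of_isCompact {X : Type*} [TopologicalSpace X] {K : Set X}
    {f q : X → ℝ} (hK : IsCompact K) (hf : ContinuousOn f K) (hq : ContinuousOn q K)
    (hpos : ∀ y ∈ K, 0 < q y) (C : ℝ) :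
    ∀ᶠ ρ in atTop, ∀ y ∈ K, C < f y + ρ * q y := by
  obtain ⟨a, ha, haq⟩ := hK.exists_forall_le' hq hpos
  obtain ⟨b, hb⟩ := hK.bddBelow_image hf
  have hlim : Tendsto (fun ρ => b + ρ * a) atTop atTop :=
    tendsto_atTop_add_const_left _ _ (tendsto_id.atTop_mul_const ha)
  filter_upwards [hlim.eventually_gt_atTop C, eventually_ge_atTop 0] with ρ hρ hρ0 y hy
  calc C < b + ρ * a := hρ
    _ ≤ f y + ρ * q y := by
      gcongr
      exacts [hb (mem_image_of_mem f hy), haq y hy]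

lemma eventually_forall_penalty_le_imp_of_isCompact {X : Type*} [TopologicalSpace X] {K : Set X}
    {f D : X → ℝ} {c m : ℝ} (hK : IsCompact K) (hf : Continuous f) (hD : Continuous D)
    (hm : 0 < m) (hc : ∀ y ∈ K, D y = 0 → c < f y) (C : ℝ) :
    ∀ᶠ ρ in atTop, ∀ y ∈ K, f y + ρ / 2 * D y ^ 2 ≤ C → D y < m ∧ c < f y := by
  have hbad : IsCompact (K ∩ {y | m ≤ D y ∨ f y ≤ c}) :=
    hK.inter_right ((isClosed_le continuous_const hD).union (isClosed_le hf continuous_const))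
  have hbad_pos : ∀ y ∈ K ∩ {y | m ≤ D y ∨ f y ≤ c}, 0 < D y ^ 2 / 2 := by
    rintro y ⟨hyK, hy⟩
    have hne : D y ≠ 0 := fun h0 =>
      hy.elim (fun h => (hm.trans_le h).ne' h0) (hc y hyK h0).not_ge
    positivity
  filter_upwards [eventually_forall_lt_add_mul_of_isCompact hbad hf.continuousOn
    (by fun_prop) hbad_pos C] with ρ hρ y hyK hy
  by_contra! hcon
  have hybad : m ≤ D y ∨ f y ≤ c := or_iff_not_imp_left.2 fun h => hcon (not_le.1 h)
  linarith [hρ y ⟨hyK, hybad⟩]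

variable {X : Type*} [PseudoMetricSpace X]

/-- The quadratic penalty function, with parameter `ρ`, of the problem of minimizing `f` subject to
`D = 0`, regularized by a proximal term with step size `t` and centre `z`. -/
def proxPenalty (f D : X → ℝ) (ρ t : ℝ) (z y : X) : ℝ :=
  f y + (2 * t)⁻¹ * dist y z ^ 2 + ρ / 2 * D y ^ 2

lemma exists_isLocalMin_proxPenalty [ProperSpace X] {f D : X → ℝ} {x z : X} {r σ t m : ℝ}
    (hf : Continuous f) (hD : Continuous D) (ht : 0 < t) (hσ : 0 < σ) (hm : 0 < m)
    (hmin : ∀ y ∈ closedBall x r, D y = 0 → f x ≤ f y)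
    (hz : D z = 0) (hzr : dist z x + σ * t ≤ r) (hfz : f z - f x < σ ^ 2 / 4 * t) :
    ∃ ρ > 0, ∃ x', IsLocalMin (proxPenalty f D ρ t z) x' ∧
      dist x' z < σ * t ∧ D x' < m ∧ ρ * D x' ^ 2 < σ ^ 2 * t := by
  have hσt : 0 < σ * t := by positivity
  have hgap : 0 < σ ^ 2 / 4 * t := by positivity
  have hzK : z ∈ closedBall x r := mem_closedBall.2 (by linarith)
  obtain ⟨ρ, hρK, hρ⟩ := ((eventually_forall_penalty_le_imp_of_isCompact
    (c := f x - σ ^ 2 / 4 * t) (isCompact_closedBall x r) hf hD hm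
    (fun y hy h0 => by linarith [hmin y hy h0]) (f z)).and (eventually_gt_atTop 0)).exists
  obtain ⟨x', hx'K, hx'min⟩ := (isCompact_closedBall x r).exists_isMinOn ⟨z, hzK⟩
    (f := proxPenalty f D ρ t z) (by unfold proxPenalty; fun_prop)
  have hle : f x' + (2 * t)⁻¹ * dist x' z ^ 2 + ρ / 2 * D x' ^ 2 ≤ f z := by
    simpa [proxPenalty, hz] using hx'min hzK
  have hprox : 0 ≤ (2 * t)⁻¹ * dist x' z ^ 2 := by positivity
  have hpen : 0 ≤ ρ / 2 * D x' ^ 2 := by positivity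
  obtain ⟨hDm, hfx'⟩ := hρK x' hx'K (by linarith)
  have hdist : dist x' z < σ * t := by
    have hsq : (2 * t)⁻¹ * dist x' z ^ 2 < (2 * t)⁻¹ * (σ * t) ^ 2 := by
      calc (2 * t)⁻¹ * dist x' z ^ 2 < σ ^ 2 / 2 * t := by linarith
        _ = (2 * t)⁻¹ * (σ * t) ^ 2 := by field_simp
    exact lt_of_pow_lt_pow_left₀ 2 hσt.le (lt_of_mul_lt_mul_left hsq (by positivity))
  have hball : closedBall x r ∈ 𝓝 x' :=
    closedBall_mem_nhds_of_mem (mem_ball.2 (by linarith [dist_triangle x' z x]))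
  exact ⟨ρ, hρ, x', hx'min.isLocalMin hball, hdist, hDm, by linarith⟩

end Penalization

section Stationarity

variable {E G : Type*} [NormedAddCommGroup E] [InnerProductSpace ℝ E]
  [NormedAddCommGroup G] [InnerProductSpace ℝ G] [ProperSpace G]
  {f : E → ℝ} {F : E → G} {Γ : Set G} {x d : E}

lemma exists_mem_regNormal_of_isLocalMin_proxPenalty [CompleteSpace E] {z : E} {ρ t : ℝ}
    (hf : DifferentiableAt ℝ f x) (hF : (fun u => F u - F x) =O[𝓝 x] fun u => u - x)
    (hΓ : IsClosed Γ) (hne : Γ.Nonempty) (hρ : 0 ≤ ρ)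
    (hmin : IsLocalMin (proxPenalty f (fun u => infDist (F u) Γ) ρ t z) x) :
    ∃ δ, ‖δ‖ = infDist (F x) Γ ∧ ρ • δ ∈ regNormal Γ (F x - δ) ∧
      t⁻¹ • (z - x) - gradient f x ∈ limSubdiff (fun u => ⟪ρ • δ, F u⟫) x := by
  obtain ⟨y, hy, hxy⟩ := hΓ.exists_infDist_eq_dist hne (F x)
  rw [dist_eq_norm] at hxy
  refine ⟨F x - y, hxy.symm, ?_, ?_⟩
  · rw [sub_sub_cancel]
    exact smul_mem_regNormal hρ (sub_mem_regNormal_of_infDist_eq hy hxy)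
  · have hgrad := hasGradientAt_add_norm_sub_sq hf.hasGradientAt (2 * t)⁻¹ z
    simp only [← dist_eq_norm] at hgrad
    convert neg_mem_limSubdiff_of_isLocalMin_add_infDist_sq hgrad hF hρ hy hxy hmin using 1
    rw [mul_inv, mul_inv_cancel_left₀ two_ne_zero, ← neg_sub x z, smul_neg]
    abel

lemma tendsto_slope_of_hasGradientAt [CompleteSpace E] {g : E} (hf : HasGradientAt f g x)
    {ι : Type*} {L : Filter ι} {w : ι → E} {t : ι → ℝ} (hw : Tendsto w L (𝓝 d))
    (ht : ∀ k, 0 < t k) (ht0 : Tendsto t L (𝓝 0)) :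
    Tendsto (fun k => (t k)⁻¹ * (f (x + t k • w k) - f x)) L (𝓝 ⟪g, d⟫) := by
  refine hf.hasFDerivAt.hasFDerivWithinAt.lim (c := fun k => (t k)⁻¹) (d := fun k => t k • w k)
    (s := univ) (by simpa using ht0.smul hw) (.of_forall fun _ => mem_univ _) ?_
  exact hw.congr fun k => (inv_smul_smul₀ (ht k).ne' (w k)).symm

variable [ProperSpace E]

lemma exists_stationary_near_feasible (hf : Differentiable ℝ f) (hF : LocallyLipschitz F)
    (hΓ : IsClosed Γ) {z : E} {r σ t : ℝ} (ht : 0 < t) (hσ : 0 < σ)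
    (hmin : ∀ y ∈ closedBall x r, F y ∈ Γ → f x ≤ f y)
    (hz : F z ∈ Γ) (hzr : dist z x + σ * t ≤ r) (hfz : f z - f x < σ ^ 2 / 4 * t) :
    ∃ x' δ, ∃ ρ ≥ (0 : ℝ),
      t⁻¹ • (z - x') - gradient f x' ∈ limSubdiff (fun u => ⟪ρ • δ, F u⟫) x' ∧
      ρ • δ ∈ regNormal Γ (F x' - δ) ∧
      ‖x' - z‖ < σ * t ∧ ‖δ‖ < σ * t ∧ ρ * ‖δ‖ ^ 2 < σ ^ 2 * t := by
  have hne : Γ.Nonempty := ⟨F z, hz⟩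
  obtain ⟨ρ, hρ, x', hx'min, hx'z, hdist, hpen⟩ := exists_isLocalMin_proxPenalty hf.continuous
    ((continuous_infDist_pt Γ).comp hF.continuous) ht hσ (mul_pos hσ ht)
    (fun y hy h0 => hmin y hy ((hΓ.mem_iff_infDist_zero hne).2 h0))
    (infDist_zero_of_mem hz) hzr hfz
  obtain ⟨δ, hδ, hnormal, hstat⟩ := exists_mem_regNormal_of_isLocalMin_proxPenalty
    (hf x') (isBigO_sub_of_locallyLipschitz hF x') hΓ hne hρ.le hx'min
  rw [dist_eq_norm] at hx'z
  rw [Function.comp_apply, ← hδ] at hdist hpen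
  exact ⟨x', δ, ρ, hρ.le, hstat, hnormal, hx'z, hdist, hpen⟩

lemma exists_approx_stationary_of_mem_tanCone (hf : Differentiable ℝ f)
    (hF : LocallyLipschitz F) (hΓ : IsClosed Γ) (hmin : IsLocalMinOn f (F ⁻¹' Γ) x)
    (hd : d ∈ tanCone (F ⁻¹' Γ) x) (hgd : ⟪gradient f x, d⟫ ≤ 0) {s : ℝ} (hs : 0 < s) :
    ∃ t > 0, ∃ x' ε δ, ∃ ρ ≥ (0 : ℝ), t < s ∧
      ε - gradient f x' ∈ limSubdiff (fun u => ⟪ρ • δ, F u⟫) x' ∧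
      ρ • δ ∈ limNormal Γ (F x' - δ) ∧
      ‖t⁻¹ • (x' - x) - d‖ < s ∧ ‖ε‖ < s ∧ ‖t⁻¹ • δ‖ < s ∧ t⁻¹ * (ρ * ‖δ‖ ^ 2) < s ^ 2 := by
  obtain ⟨-, w, t, hw, ht, ht0, hmem⟩ := hd
  obtain ⟨r, hr, hball⟩ :=
    nhds_basis_closedBall.eventually_iff.1 (eventually_nhdsWithin_iff.1 hmin)
  obtain ⟨σ, hσ, rfl⟩ : ∃ σ > 0, σ + σ = s := ⟨s / 2, half_pos hs, add_halves s⟩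
  have hslope : ∀ᶠ k in atTop, (t k)⁻¹ * (f (x + t k • w k) - f x) < σ ^ 2 / 4 :=
    (tendsto_slope_of_hasGradientAt (hf x).hasGradientAt hw ht ht0).eventually_lt_const
      (hgd.trans_lt (by positivity))
  have hnear : ∀ᶠ k in atTop, dist (x + t k • w k) x + σ * t k < r := by
    refine Tendsto.eventually_lt_const hr ?_
    simpa using (ht0.smul hw).norm.add (ht0.const_mul σ)
  have hdir : ∀ᶠ k in atTop, ‖w k - d‖ < σ :=
    (tendsto_iff_norm_sub_tendsto_zero.1 hw).eventually_lt_const hσ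
  obtain ⟨k, hslope, hnear, hdir, hts⟩ :=
    (hslope.and (hnear.and (hdir.and (ht0.eventually_lt_const hs)))).exists
  rw [inv_mul_lt_iff₀' (ht k)] at hslope
  obtain ⟨x', δ, ρ, hρ, hstat, hnormal, hx', hδ, hρδ⟩ := exists_stationary_near_feasible hf hF hΓ
    (ht k) hσ (fun y hy => hball hy) (hmem k) hnear.le hslope
  rw [← norm_inv_smul_lt_iff (ht k)] at hx' hδ
  refine ⟨t k, ht k, x', _, δ, ρ, hρ, hts, hstat, regNormal_subset_limNormal hnormal,
    ?_, ?_, by linarith, ?_⟩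
  · calc ‖(t k)⁻¹ • (x' - x) - d‖ = ‖(t k)⁻¹ • (x' - (x + t k • w k)) + (w k - d)‖ := by
          rw [← sub_sub, smul_sub _ (x' - x), inv_smul_smul₀ (ht k).ne', sub_add_sub_cancel]
      _ < σ + σ := (norm_add_le _ _).trans_lt (add_lt_add hx' hdir)
  · rw [← neg_sub x', smul_neg, norm_neg]
    linarith
  · rw [inv_mul_lt_iff₀' (ht k)]
    refine hρδ.trans_le ?_
    have := (ht k).le
    gcongr
    linarith

end Stationarity

section DirectionalStationarity

variable {n l : ℕ} {f : Eu n → ℝ} {F : Eu n → Eu l} {Γ : Set (Eu l)} {x d : Eu n}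

lemma amSeqDir_of_tendsto_inv_smul {xk εk : ℕ → Eu n} {δk : ℕ → Eu l} {ρk t : ℕ → ℝ}
    (hρ : ∀ k, 0 ≤ ρk k) (ht : ∀ k, 0 < t k) (ht0 : Tendsto t atTop (𝓝 0)) (hd : ‖d‖ = 1)
    (hstat : ∀ k, εk k - gradient f (xk k) ∈ scalSubdiff F (ρk k • δk k) (xk k))
    (hnormal : ∀ k, ρk k • δk k ∈ limNormal Γ (F (xk k) - δk k)) (hne : ∀ k, xk k ≠ x)
    (hx : Tendsto (fun k => (t k)⁻¹ • (xk k - x)) atTop (𝓝 d)) (hε : Tendsto εk atTop (𝓝 0))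
    (hδ : Tendsto (fun k => (t k)⁻¹ • δk k) atTop (𝓝 0))
    (hρδ : Tendsto (fun k => (t k)⁻¹ * (ρk k * ‖δk k‖ ^ 2)) atTop (𝓝 0)) :
    AMSeqDir f F Γ x xk (fun k => ρk k • δk k) δk εk d := by
  have hnorm (k) : ‖ρk k • δk k‖ = ρk k * ‖δk k‖ := by
    rw [norm_smul, Real.norm_of_nonneg (hρ k)]
  refine ⟨⟨hstat, hnormal,
    tendsto_sub_nhds_zero_iff.1 (tendsto_zero_of_tendsto_inv_smul ht ht0 hx),
    tendsto_zero_of_tendsto_inv_smul ht ht0 hδ, hε⟩, hne,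
    tendsto_inv_norm_smul_of_tendsto_inv_smul ht hx hd hx,
    tendsto_inv_norm_smul_of_tendsto_inv_smul ht hx hd hδ,
    ⟨0, fun _ => le_rfl, tendsto_const_nhds, fun k => ?_⟩, ?_⟩
  · simp [hnorm, smul_smul, mul_comm]
  · obtain ⟨M, hM⟩ := (tendsto_inv_norm_smul_of_tendsto_inv_smul ht hx hd hρδ).bddAbove_range
    refine ⟨M, fun k => ?_⟩
    calc ‖δk k‖ * ‖ρk k • δk k‖ / ‖xk k - x‖ = ‖xk k - x‖⁻¹ • (ρk k * ‖δk k‖ ^ 2) := by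
          rw [hnorm, smul_eq_mul, div_eq_inv_mul]
          ring
      _ ≤ M := hM (mem_range_self k)

end DirectionalStationarity

theorem stmt14_general {n l : ℕ}
    (f : Eu n → ℝ) (hf : Differentiable ℝ f)
    (F : Eu n → Eu l) (hLip : LocallyLipschitz F)
    (Γ : Set (Eu l)) (hΓcl : IsClosed Γ)
    (x : Eu n) (hmin : IsLocalMinOn f (F ⁻¹' Γ) x) :
    ∀ d ∈ implCritCone f F Γ x, ‖d‖ = 1 → AMStatDir f F Γ x d := by
  rintro d ⟨hgd, hd⟩ hd1
  have hs (k : ℕ) : 0 < 1 / ((k : ℝ) + 1) := Nat.one_div_pos_of_nat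
  have hs0 := tendsto_one_div_add_atTop_nhds_zero_nat (𝕜 := ℝ)
  choose t ht xk εk δk ρk hρ hts hstat hnormal hx hε hδ hρδ using fun k =>
    exists_approx_stationary_of_mem_tanCone hf hLip hΓcl hmin hd hgd (hs k)
  have hne (k) : xk k ≠ x := by
    intro h
    have hlt := hx k
    rw [h, sub_self, smul_zero, zero_sub, norm_neg, hd1, lt_div_iff₀ (by positivity)] at hlt
    linarith [k.cast_nonneg (α := ℝ)]
  exact ⟨xk, fun k => ρk k • δk k, δk, εk, amSeqDir_of_tendsto_inv_smul hρ ht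
    (squeeze_zero (fun k => (ht k).le) (fun k => (hts k).le) hs0) hd1 hstat hnormal hne
    (tendsto_iff_norm_sub_tendsto_zero.2
      (squeeze_zero (fun _ => norm_nonneg _) (fun k => (hx k).le) hs0))
    (squeeze_zero_norm (fun k => (hε k).le) hs0) (squeeze_zero_norm (fun k => (hδ k).le) hs0)
    (squeeze_zero (fun k => by have := ht k; have := hρ k; positivity) (fun k => (hρδ k).le)
      (by simpa using hs0.pow 2))⟩

/-- Under GACQ, a local minimizer is AM-stationary in every explicit critical unit
direction. -/
theorem stmt14 {n l : ℕ}
    (f : Eu n → ℝ) (hf : ContDiff ℝ 1 f)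
    (F : Eu n → Eu l) (F' : Eu n → Eu n → Eu l)
    (hLip : LocallyLipschitz F) (hF' : IsDirDeriv F F')
    (Γ : Set (Eu l)) (hΓne : Γ.Nonempty) (hΓcl : IsClosed Γ)
    (x : Eu n) (hfeas : F x ∈ Γ) (hmin : IsLocalMinOn f (F ⁻¹' Γ) x)
    (hGACQ : tanCone (F ⁻¹' Γ) x = linCone F F' Γ x) :
    ∀ d ∈ critCone f F F' Γ x, ‖d‖ = 1 → AMStatDir f F Γ x d :=
  fun d hd => stmt14_general f (hf.differentiable one_ne_zero) F hLip Γ hΓcl x hmin d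
    ⟨hd.1, hGACQ ▸ hd.2⟩

end
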